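/- Let R be a commutative ring and M a countably generated R-module. Then M is projective if and only if M is flat and Mittag-Leffler. (Corollary 3.33, the Raynaud–Gruson theorem rederived in the paper.) -/

import Mathlib

/-!
Projective modules are retracts of free ones, and a tensor with a free module is determined by its
coordinates, which are computed factorwise in a product.

Conversely, let `M` be flat Mittag-Leffler. The submodules `D ≤ N` supporting a given tensor
`x : M ⊗ N` are stable under arbitrary intersections, so there is a smallest one. For finite
projective `F` and `N = Dual R F`, where `M ⊗ N` is `F →ₗ[R] M`, this gives each `w : F →ₗ[R] M` a
factorization `w = v ∘ a` through a finite free module such that `a` factors through every map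
`c ∘ a` with `v` factoring through `c`. Given a surjection `p : L → M` and a lift `t` of `v`, the
partial section `w x ↦ t (a x)` of `p` is then well defined: by flatness, `v (a x) = 0` implies
`c (a x) = 0` for some such `c`, hence `a x = 0`. Moreover, a lift to a larger finite free module
can be corrected by a map into `ker p` so as to extend this partial section to any further element
of `M`. Countably many extensions give a section of `p`.
-/

universe u

open TensorProduct DirectSum

/-- The canonical map `M ⊗[R] (∏ i, Q i) →ₗ[R] ∏ i, (M ⊗[R] Q i)`,
determined by `m ⊗ (q_i)_i ↦ (m ⊗ q_i)_i`. -/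
noncomputable def tensorPiMap (R : Type u) [CommRing R] (M : Type u) [AddCommGroup M]
    [Module R M] {ι : Type u} (Q : ι → Type u) [∀ i, AddCommGroup (Q i)]
    [∀ i, Module R (Q i)] :
    (M ⊗[R] (∀ i, Q i)) →ₗ[R] ∀ i, M ⊗[R] Q i :=
  LinearMap.pi fun i => LinearMap.lTensor M (LinearMap.proj i)

/-- An `R`-module `M` is Mittag-Leffler if for every family `(Q i)` of `R`-modules the
canonical map `M ⊗[R] (∏ i, Q i) → ∏ i, (M ⊗[R] Q i)` is injective. -/
def IsMittagLeffler (R : Type u) [CommRing R] (M : Type u) [AddCommGroup M]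
    [Module R M] : Prop :=
  ∀ (ι : Type u) (Q : ι → Type u) [∀ i, AddCommGroup (Q i)] [∀ i, Module R (Q i)],
    Function.Injective (tensorPiMap R M Q)

/-- An `R`-module is flat Mittag-Leffler if it is flat and Mittag-Leffler. -/
def IsFlatMittagLeffler (R : Type u) [CommRing R] (M : Type u) [AddCommGroup M]
    [Module R M] : Prop :=
  Module.Flat R M ∧ IsMittagLeffler R M

section Projective

variable {R : Type u} [CommRing R] {M N : Type u} [AddCommGroup M] [Module R M]
  [AddCommGroup N] [Module R N]

theorem tensorPiMap_rTensor {ι : Type u} (Q : ι → Type u) [∀ i, AddCommGroup (Q i)]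
    [∀ i, Module R (Q i)] (f : M →ₗ[R] N) (z : M ⊗[R] ∀ i, Q i) (i : ι) :
    tensorPiMap R N Q (f.rTensor _ z) i = f.rTensor (Q i) (tensorPiMap R M Q z i) :=
  LinearMap.congr_fun ((LinearMap.lTensor_comp_rTensor M f (LinearMap.proj i)).trans
    (LinearMap.rTensor_comp_lTensor M f (LinearMap.proj i)).symm) z

theorem IsMittagLeffler.of_retract (hN : IsMittagLeffler R N) (s : M →ₗ[R] N) (r : N →ₗ[R] M)
    (hrs : r ∘ₗ s = LinearMap.id) : IsMittagLeffler R M := by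
  intro ι Q _ _ z z' hz
  have hs : Function.Injective (s.rTensor (∀ i, Q i)) := by
    refine Function.LeftInverse.injective (g := r.rTensor _) fun z ↦ ?_
    rw [← LinearMap.rTensor_comp_apply, hrs, LinearMap.rTensor_id_apply]
  apply hs
  apply hN ι Q
  funext i
  rw [tensorPiMap_rTensor, tensorPiMap_rTensor, hz]

theorem isMittagLeffler_finsupp (κ : Type u) : IsMittagLeffler R (κ →₀ R) := by
  classical
  intro ι Q _ _ z z' hz
  apply (TensorProduct.finsuppScalarLeft R (∀ i, Q i) κ).injective
  have coord (y : (κ →₀ R) ⊗[R] ∀ i, Q i) (k : κ) (i : ι) :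
      TensorProduct.finsuppScalarLeft R (∀ i, Q i) κ y k i =
        TensorProduct.finsuppScalarLeft R (Q i) κ (tensorPiMap R (κ →₀ R) Q y i) k := by
    induction y with
    | zero => simp
    | tmul f q => simp [tensorPiMap]
    | add y y' hy hy' => simp [hy, hy']
  ext k i
  rw [coord, coord, hz]

theorem isMittagLeffler_of_projective [Module.Projective R M] : IsMittagLeffler R M := by
  obtain ⟨s, hs⟩ := Module.projective_def'.1 ‹Module.Projective R M›
  exact (isMittagLeffler_finsupp M).of_retract s _ hs

end Projective

section Support

variable {R M N P : Type*} [CommRing R] [AddCommGroup M] [Module R M]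
  [AddCommGroup N] [Module R N] [AddCommGroup P] [Module R P]

/-- The tensor `x : M ⊗ N` is supported in the submodule `D` of `N` if it comes from `M ⊗ D`. -/
def IsSupportedIn (x : M ⊗[R] N) (D : Submodule R N) : Prop :=
  x ∈ LinearMap.range (D.subtype.lTensor M)

theorem isSupportedIn_iff_lTensor_mkQ_eq_zero {x : M ⊗[R] N} {D : Submodule R N} :
    IsSupportedIn x D ↔ D.mkQ.lTensor M x = 0 :=
  (lTensor_exact M (LinearMap.exact_subtype_mkQ D) D.mkQ_surjective x).symm

theorem isSupportedIn_ker_iff [Module.Flat R M] {x : M ⊗[R] N} (f : N →ₗ[R] P) :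
    IsSupportedIn x (LinearMap.ker f) ↔ f.lTensor M x = 0 :=
  (Module.Flat.lTensor_exact M (LinearMap.exact_subtype_ker_map f) x).symm

theorem isSupportedIn_lTensor_range (f : N →ₗ[R] P) (x : M ⊗[R] N) :
    IsSupportedIn (f.lTensor M x) (LinearMap.range f) :=
  ⟨f.rangeRestrict.lTensor M x, by
    rw [← LinearMap.lTensor_comp_apply, LinearMap.subtype_comp_codRestrict]⟩

end Support

theorem IsMittagLeffler.isSupportedIn_iInf {R : Type u} [CommRing R] {M N : Type u}
    [AddCommGroup M] [Module R M] [Module.Flat R M] (hM : IsMittagLeffler R M)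
    [AddCommGroup N] [Module R N] {x : M ⊗[R] N} {ι : Type u} {D : ι → Submodule R N}
    (hD : ∀ i, IsSupportedIn x (D i)) : IsSupportedIn x (⨅ i, D i) := by
  let f : N →ₗ[R] ∀ i, N ⧸ D i := LinearMap.pi fun i ↦ (D i).mkQ
  have hf : LinearMap.ker f = ⨅ i, D i := by simp only [f, LinearMap.ker_pi, Submodule.ker_mkQ]
  rw [← hf, isSupportedIn_ker_iff]
  apply hM ι fun i ↦ N ⧸ D i
  rw [map_zero]
  funext i
  calc tensorPiMap R M (fun i ↦ N ⧸ D i) (f.lTensor M x) i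
      = (LinearMap.proj i ∘ₗ f).lTensor M x := (LinearMap.lTensor_comp_apply ..).symm
    _ = 0 := isSupportedIn_iff_lTensor_mkQ_eq_zero.1 (hD i)

section TensorDual

variable {R M F G : Type*} [CommRing R] [AddCommGroup M] [Module R M]
  [AddCommGroup F] [Module R F] [Module.Finite R F] [Module.Projective R F]
  [AddCommGroup G] [Module R G] [Module.Finite R G] [Module.Projective R G]

variable (R M F) in
/-- `M ⊗ F* ≃ Hom(F, M)` for finite projective `F`: the form of `dualTensorHomEquiv` with the dual
on the right, where supports are taken. -/
noncomputable def tensorDualEquiv : M ⊗[R] Module.Dual R F ≃ₗ[R] F →ₗ[R] M :=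
  TensorProduct.comm R M (Module.Dual R F) ≪≫ₗ dualTensorHomEquiv R F M

theorem tensorDualEquiv_tmul (m : M) (φ : Module.Dual R F) :
    tensorDualEquiv R M F (m ⊗ₜ φ) = φ.smulRight m :=
  rfl

theorem tensorDualEquiv_lTensor_dualMap (c : F →ₗ[R] G) (x : M ⊗[R] Module.Dual R G) :
    tensorDualEquiv R M F (c.dualMap.lTensor M x) = tensorDualEquiv R M G x ∘ₗ c := by
  induction x with
  | zero => simp
  | tmul m φ => rfl
  | add x y hx hy => simp [hx, hy, LinearMap.add_comp]

theorem isSupportedIn_tensorDualEquiv_symm_comp (c : F →ₗ[R] G) (v : G →ₗ[R] M) :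
    IsSupportedIn ((tensorDualEquiv R M F).symm (v ∘ₗ c)) (LinearMap.range c.dualMap) := by
  have hv : (tensorDualEquiv R M F).symm (v ∘ₗ c) =
      c.dualMap.lTensor M ((tensorDualEquiv R M G).symm v) := by
    rw [LinearEquiv.symm_apply_eq, tensorDualEquiv_lTensor_dualMap, LinearEquiv.apply_symm_apply]
  rw [hv]
  exact isSupportedIn_lTensor_range _ _

theorem exists_factorization_of_isSupportedIn {w : F →ₗ[R] M} {C : Submodule R (Module.Dual R F)}
    (hC : IsSupportedIn ((tensorDualEquiv R M F).symm w) C) :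
    ∃ (k : ℕ) (a : F →ₗ[R] (Fin k → R)) (v : (Fin k → R) →ₗ[R] M),
      v ∘ₗ a = w ∧ ∀ j, LinearMap.proj j ∘ₗ a ∈ C := by
  obtain ⟨z, hz⟩ := hC
  obtain ⟨k, m, φ, rfl⟩ := TensorProduct.exists_sum_tmul_eq z
  refine ⟨k, LinearMap.pi fun j ↦ (φ j : Module.Dual R F), Fintype.linearCombination R m, ?_,
    fun j ↦ (φ j).2⟩
  rw [LinearEquiv.eq_symm_apply] at hz
  rw [← hz]
  ext x
  simp [Fintype.linearCombination_apply, tensorDualEquiv_tmul]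

end TensorDual

/-- A linear map `v : G → M` is retractable on `A ≤ G` if every map `c` from `G` to a finite
projective module through which `v` factors has a retraction on `A`. For `A` the image of a
transition map, this is the Mittag-Leffler condition in the system of finite projective modules
over `M`. -/
def IsRetractableOn {R : Type u} [CommRing R] {G M : Type*} [AddCommGroup G] [Module R G]
    [AddCommGroup M] [Module R M] (v : G →ₗ[R] M) (A : Submodule R G) : Prop :=
  ∀ ⦃G' : Type u⦄ [AddCommGroup G'] [Module R G'] [Module.Finite R G'] [Module.Projective R G']
    (c : G →ₗ[R] G') (v' : G' →ₗ[R] M), v' ∘ₗ c = v →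
      ∃ b : G' →ₗ[R] G, ∀ x ∈ A, b (c x) = x

section Retractable

variable {R : Type u} [CommRing R] {G M L : Type*} [AddCommGroup G] [Module R G]
  [AddCommGroup M] [Module R M] [AddCommGroup L] [Module R L]

theorem isRetractableOn_bot (v : G →ₗ[R] M) : IsRetractableOn v ⊥ :=
  fun _ _ _ _ _ _ _ _ ↦ ⟨0, fun _ hx ↦ ((Submodule.mem_bot R).1 hx).symm⟩

theorem IsRetractableOn.eq_zero_of_apply_eq_zero [Module.Flat R M] [Module.Finite R G]
    [Module.Free R G] {v : G →ₗ[R] M} {A : Submodule R G} (hv : IsRetractableOn v A)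
    {x : G} (hx : x ∈ A) (hvx : v x = 0) : x = 0 := by
  obtain ⟨k, c, v', hc, hcx⟩ := Module.Flat.exists_factorization_of_apply_eq_zero_of_free hvx
  obtain ⟨b, hb⟩ := hv c v' hc.symm
  rw [← hb x hx, hcx, map_zero]

theorem IsRetractableOn.exists_lift {p : L →ₗ[R] M} (hp : Function.Surjective p)
    {t : G →ₗ[R] L} {A : Submodule R G} (ht : IsRetractableOn (p ∘ₗ t) A)
    {G' : Type u} [AddCommGroup G'] [Module R G'] [Module.Finite R G'] [Module.Projective R G']
    {c : G →ₗ[R] G'} {v' : G' →ₗ[R] M} (hc : v' ∘ₗ c = p ∘ₗ t) :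
    ∃ t' : G' →ₗ[R] L, p ∘ₗ t' = v' ∧ ∀ x ∈ A, t' (c x) = t x := by
  obtain ⟨s, hs⟩ := Module.projective_lifting_property p v' hp
  obtain ⟨b, hb⟩ := ht c v' hc
  have hker : p ∘ₗ (s ∘ₗ c - t) = 0 := by
    rw [LinearMap.comp_sub, ← LinearMap.comp_assoc, hs, hc, sub_self]
  refine ⟨s - (s ∘ₗ c - t) ∘ₗ b, ?_, fun x hx ↦ ?_⟩
  · rw [LinearMap.comp_sub, ← LinearMap.comp_assoc, hker, hs, LinearMap.zero_comp, sub_zero]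
  · simp [hb x hx]

end Retractable

theorem IsMittagLeffler.exists_isRetractableOn_range {R : Type u} [CommRing R] {M F : Type u}
    [AddCommGroup M] [Module R M] [Module.Flat R M] (hM : IsMittagLeffler R M)
    [AddCommGroup F] [Module R F] [Module.Finite R F] [Module.Projective R F] (w : F →ₗ[R] M) :
    ∃ (k : ℕ) (a : F →ₗ[R] (Fin k → R)) (v : (Fin k → R) →ₗ[R] M),
      v ∘ₗ a = w ∧ IsRetractableOn v (LinearMap.range a) := by
  let x := (tensorDualEquiv R M F).symm w
  let C : Submodule R (Module.Dual R F) := ⨅ D : {D // IsSupportedIn x D}, D.1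
  have hC : IsSupportedIn x C := hM.isSupportedIn_iInf fun D ↦ D.2
  obtain ⟨k, a, v, rfl, ha⟩ := exists_factorization_of_isSupportedIn hC
  refine ⟨k, a, v, rfl, fun G' _ _ _ _ c v' hc ↦ ?_⟩
  have hca : IsSupportedIn x (LinearMap.range (c ∘ₗ a).dualMap) := by
    simpa only [x, ← hc, LinearMap.comp_assoc] using
      isSupportedIn_tensorDualEquiv_symm_comp (c ∘ₗ a) v'
  have hle : C ≤ LinearMap.range (c ∘ₗ a).dualMap := iInf_le_of_le ⟨_, hca⟩ le_rfl
  choose b hb using fun j ↦ hle (ha j)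
  refine ⟨LinearMap.pi b, ?_⟩
  rintro _ ⟨y, rfl⟩
  funext j
  exact LinearMap.congr_fun (hb j) y

theorem exists_linearMap_of_forall_exists_extension {R E F : Type*} [Ring R] [AddCommGroup E]
    [Module R E] [AddCommGroup F] [Module R F] {P : (E →ₗ.[R] F) → Prop} {S : Set E}
    (hS : S.Countable) (hspan : Submodule.span R S = ⊤) (hP : ∃ f, P f)
    (hext : ∀ f, P f → ∀ x ∈ S, ∃ g, P g ∧ f ≤ g ∧ x ∈ g.domain) :
    ∃ φ : E →ₗ[R] F, ∀ x, ∃ f, P f ∧ (x, φ x) ∈ f.graph := by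
  obtain ⟨f₀, hf₀⟩ := hP
  have := hS.toEncodable
  let 𝒟 (x : S) : Order.Cofinal {f // P f} :=
    { carrier := {f | x.1 ∈ f.1.domain}
      isCofinal := fun f ↦
        let ⟨g, hg, hfg, hx⟩ := hext f f.2 x x.2
        ⟨⟨g, hg⟩, hx, hfg⟩ }
  let I := Order.idealOfCofinals ⟨f₀, hf₀⟩ 𝒟
  let c : Set (E →ₗ.[R] F) := Subtype.val '' (I : Set {f // P f})
  have hcP : ∀ f ∈ c, P f := by
    rintro _ ⟨f, -, rfl⟩
    exact f.2
  have hc : DirectedOn (· ≤ ·) c := directedOn_image.2 I.directed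
  have hmem {x : E} : x ∈ (LinearPMap.sSup c hc).domain ↔ ∃ f ∈ c, x ∈ f.domain :=
    LinearPMap.mem_domain_sSup_iff (I.nonempty.image _) hc
  have htop : (LinearPMap.sSup c hc).domain = ⊤ := by
    rw [eq_top_iff, ← hspan, Submodule.span_le]
    intro x hx
    obtain ⟨f, hxf, hf⟩ := Order.cofinal_meets_idealOfCofinals ⟨f₀, hf₀⟩ 𝒟 ⟨x, hx⟩
    exact hmem.2 ⟨f, ⟨f, hf, rfl⟩, hxf⟩
  refine ⟨(LinearPMap.sSup c hc).toFun ∘ₗ (LinearEquiv.ofTop _ htop).symm.toLinearMap, fun x ↦ ?_⟩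
  obtain ⟨f, hf, hx⟩ := hmem.1 (htop ▸ Submodule.mem_top : x ∈ (LinearPMap.sSup c hc).domain)
  exact ⟨f, hcP f hf, f.mem_graph_iff.2 ⟨⟨x, hx⟩, rfl, (LinearPMap.sSup_apply hc hf ⟨x, hx⟩).symm⟩⟩

section Section

variable {R : Type u} [CommRing R] {M L : Type*} [AddCommGroup M] [Module R M]
  [AddCommGroup L] [Module R L]

/-- A stable partial section of `p : L → M`: a partial map `M → L` of the form `p (t x) ↦ t x`,
where `x` runs over a submodule of a finite free module on which `p ∘ t` is retractable. These are
the partial sections that extend to further elements of `M`. -/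
def IsStablePartialSection (p : L →ₗ[R] M) (f : M →ₗ.[R] L) : Prop :=
  ∃ (k : ℕ) (t : (Fin k → R) →ₗ[R] L) (A : Submodule R (Fin k → R)),
    IsRetractableOn (p ∘ₗ t) A ∧ f.graph = A.map ((p ∘ₗ t).prod t)

theorem IsStablePartialSection.apply_eq_of_mem_graph {p : L →ₗ[R] M} {f : M →ₗ.[R] L}
    (hf : IsStablePartialSection p f) {m : M} {l : L} (h : (m, l) ∈ f.graph) : p l = m := by
  obtain ⟨k, t, A, -, hgraph⟩ := hf
  rw [hgraph] at h
  obtain ⟨x, -, hx⟩ := h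
  obtain ⟨rfl, rfl⟩ := Prod.ext_iff.1 hx
  rfl

theorem IsRetractableOn.exists_graph_eq [Module.Flat R M] {p : L →ₗ[R] M} {G : Type*}
    [AddCommGroup G] [Module R G] [Module.Finite R G] [Module.Free R G] {t : G →ₗ[R] L}
    {A : Submodule R G} (ht : IsRetractableOn (p ∘ₗ t) A) :
    ∃ f : M →ₗ.[R] L, f.graph = A.map ((p ∘ₗ t).prod t) := by
  refine ⟨_, Submodule.toLinearPMap_graph_eq _ ?_⟩
  rintro _ ⟨x, hx, rfl⟩ hpx
  have hx0 : x = 0 := ht.eq_zero_of_apply_eq_zero hx hpx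
  simp [hx0]

theorem exists_isStablePartialSection [Module.Flat R M] (p : L →ₗ[R] M) :
    ∃ f, IsStablePartialSection p f := by
  have h := isRetractableOn_bot (p ∘ₗ (0 : (Fin 0 → R) →ₗ[R] L))
  obtain ⟨f, hf⟩ := h.exists_graph_eq
  exact ⟨f, 0, 0, ⊥, h, hf⟩

end Section

section Extension

variable {R : Type u} [CommRing R] {M : Type u} {L : Type*} [AddCommGroup M] [Module R M]
  [AddCommGroup L] [Module R L] [Module.Flat R M] {p : L →ₗ[R] M}

theorem IsStablePartialSection.exists_extension (hM : IsMittagLeffler R M)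
    (hp : Function.Surjective p) {f : M →ₗ.[R] L} (hf : IsStablePartialSection p f) (m : M) :
    ∃ g, IsStablePartialSection p g ∧ f ≤ g ∧ m ∈ g.domain := by
  obtain ⟨k, t, A, ht, hgraph⟩ := hf
  let w : (Fin k → R) × R →ₗ[R] M := (p ∘ₗ t).coprod (LinearMap.toSpanSingleton R M m)
  obtain ⟨k', a, v, hva, hv⟩ := hM.exists_isRetractableOn_range w
  have hva_inl : v ∘ₗ (a ∘ₗ LinearMap.inl R _ _) = p ∘ₗ t := by
    rw [← LinearMap.comp_assoc, hva, LinearMap.coprod_inl]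
  have hva_m : v (a (0, 1)) = m := by simpa [w] using LinearMap.congr_fun hva (0, 1)
  obtain ⟨t', rfl, htt'⟩ := ht.exists_lift hp hva_inl
  obtain ⟨g, hg⟩ := hv.exists_graph_eq
  refine ⟨g, ⟨k', t', _, hv, hg⟩, LinearPMap.le_of_le_graph ?_, LinearPMap.mem_domain_iff.2 ?_⟩
  · rw [hgraph, hg]
    rintro _ ⟨x, hx, rfl⟩
    exact ⟨a (x, 0), ⟨_, rfl⟩, Prod.ext (LinearMap.congr_fun hva_inl x) (htt' x hx)⟩
  · rw [hg]
    exact ⟨t' (a (0, 1)), a (0, 1), ⟨_, rfl⟩, Prod.ext hva_m rfl⟩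

theorem IsMittagLeffler.exists_section_of_surjective (hM : IsMittagLeffler R M) {S : Set M}
    (hS : S.Countable) (hspan : Submodule.span R S = ⊤) (hp : Function.Surjective p) :
    ∃ s : M →ₗ[R] L, p ∘ₗ s = LinearMap.id := by
  obtain ⟨s, hs⟩ := exists_linearMap_of_forall_exists_extension hS hspan
    (exists_isStablePartialSection p) fun f hf m _ ↦ hf.exists_extension hM hp m
  refine ⟨s, LinearMap.ext fun m ↦ ?_⟩
  obtain ⟨f, hf, hm⟩ := hs m
  exact hf.apply_eq_of_mem_graph hm

end Extension

/-- **Corollary 3.33 (Raynaud–Gruson)**: a countably generated `R`-module is projective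
if and only if it is flat and Mittag-Leffler. -/
theorem projective_iff_flat_mittagLeffler_of_countablyGenerated
    (R : Type u) [CommRing R] (M : Type u) [AddCommGroup M] [Module R M]
    (hcg : ∃ S : Set M, S.Countable ∧ Submodule.span R S = ⊤) :
    Module.Projective R M ↔ (Module.Flat R M ∧ IsMittagLeffler R M) := by
  constructor
  · intro _
    exact ⟨inferInstance, isMittagLeffler_of_projective⟩
  · rintro ⟨_, hM⟩
    obtain ⟨S, hS, hspan⟩ := hcg
    obtain ⟨s, hs⟩ := hM.exists_section_of_surjective hS hspan
      (Finsupp.linearCombination_id_surjective R M)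
    exact Module.Projective.of_split s _ hs
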